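/- Let K be a field of characteristic zero and p(x_1,x_2,x_3,x_4) a multilinear polynomial of degree four over K. Then the image of p on UT_n is {0}, UT_n^{(1)}, UT_n^{(0)}, or UT_n. -/

import Mathlib

open Matrix

namespace UTImg

/-- The evaluation of the multilinear polynomial with coefficients `α`. -/
def ev {K : Type*} [Field K] {n : ℕ} (α : Equiv.Perm (Fin 4) → K)
    (A : Fin 4 → Matrix (Fin n) (Fin n) K) : Matrix (Fin n) (Fin n) K :=
  ∑ σ : Equiv.Perm (Fin 4), α σ • (A (σ 0) * A (σ 1) * A (σ 2) * A (σ 3))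

/-- The image on upper triangular matrices. -/
def Im {K : Type*} [Field K] (n : ℕ) (α : Equiv.Perm (Fin 4) → K) :
    Set (Matrix (Fin n) (Fin n) K) :=
  {X | ∃ A : Fin 4 → Matrix (Fin n) (Fin n) K,
        (∀ q, ∀ a b : Fin n, b < a → A q a b = 0) ∧ X = ev α A}

variable {K : Type*} [Field K] {n : ℕ}

theorem ev_apply (α : Equiv.Perm (Fin 4) → K)
    (A : Fin 4 → Matrix (Fin n) (Fin n) K) (i j : Fin n) :
    ev α A i j = ∑ σ : Equiv.Perm (Fin 4),
      α σ * (A (σ 0) * A (σ 1) * A (σ 2) * A (σ 3)) i j := by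
  simp [ev, Matrix.sum_apply]

theorem Im_shift (α : Equiv.Perm (Fin 4) → K) (τ : Equiv.Perm (Fin 4)) :
    Im n (fun σ => α (τ * σ)) ⊆ Im n α := by
  rintro X ⟨A, hA, rfl⟩
  refine ⟨fun q => A (τ⁻¹ q), fun q => hA _, ?_⟩
  unfold ev
  symm
  rw [← Equiv.sum_comp (Equiv.mulLeft τ)]
  simp

theorem exists_nonroot [CharZero K] {ι : Type*} (s : Finset ι) (P : ι → Polynomial K)
    (h : ∀ i ∈ s, P i ≠ 0) : ∃ t : K, ∀ i ∈ s, (P i).eval t ≠ 0 := by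
  have h1 : ∏ i ∈ s, P i ≠ 0 := Finset.prod_ne_zero_iff.2 h
  by_contra hc
  push Not at hc
  apply h1
  apply Polynomial.funext
  intro t
  obtain ⟨i, hi, h0⟩ := hc t
  rw [Polynomial.eval_prod, Polynomial.eval_zero]
  exact Finset.prod_eq_zero hi h0

theorem bt_mul {A B : Matrix (Fin n) (Fin n) K} (hA : ∀ a b : Fin n, b < a → A a b = 0)
    (hB : ∀ a b : Fin n, b < a → B a b = 0) : ∀ a b : Fin n, b < a → (A * B) a b = 0 := by
  intro a b hab
  rw [mul_apply]
  apply Finset.sum_eq_zero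
  intro m _
  rcases lt_or_ge m a with h | h
  · rw [hA _ _ h, zero_mul]
  · rw [hB _ _ (lt_of_lt_of_le hab h), mul_zero]

theorem diag_mul {A B : Matrix (Fin n) (Fin n) K} (hA : ∀ a b : Fin n, b < a → A a b = 0)
    (hB : ∀ a b : Fin n, b < a → B a b = 0) (a : Fin n) : (A * B) a a = A a a * B a a := by
  rw [mul_apply]
  apply Finset.sum_eq_single a
  · intro m _ hm
    rcases lt_or_gt_of_ne hm with h | h
    · rw [hA _ _ h, zero_mul]
    · rw [hB _ _ h, mul_zero]
  · simp

theorem sup_mul {A B : Matrix (Fin n) (Fin n) K} (hA : ∀ a b : Fin n, b < a → A a b = 0)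
    (hB : ∀ a b : Fin n, b < a → B a b = 0) (a b : Fin n) (hab : (b : ℕ) = a + 1) :
    (A * B) a b = A a a * B a b + A a b * B b b := by
  have hne : a ≠ b := by
    intro h; rw [h] at hab; omega
  rw [mul_apply, ← Finset.sum_pair (f := fun m => A a m * B m b) hne]
  symm
  apply Finset.sum_subset (Finset.subset_univ _)
  intro m _ hm
  simp only [Finset.mem_insert, Finset.mem_singleton, not_or] at hm
  have h1 : (m : ℕ) ≠ a := fun h => hm.1 (Fin.ext h)
  have h2 : (m : ℕ) ≠ b := fun h => hm.2 (Fin.ext h)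
  rcases lt_or_ge m a with h | h
  · rw [hA _ _ h, zero_mul]
  · rw [hB m b (by rw [Fin.lt_def]; rw [Fin.le_def] at h; omega), mul_zero]

theorem upper (α : Equiv.Perm (Fin 4) → K) {A : Fin 4 → Matrix (Fin n) (Fin n) K}
    (hA : ∀ q, ∀ a b : Fin n, b < a → A q a b = 0) (a b : Fin n) (h : b < a) :
    ev α A a b = 0 := by
  rw [ev_apply]
  apply Finset.sum_eq_zero
  intro σ _
  rw [bt_mul (bt_mul (bt_mul (hA _) (hA _)) (hA _)) (hA _) a b h, mul_zero]

theorem ev_diag (α : Equiv.Perm (Fin 4) → K) {A : Fin 4 → Matrix (Fin n) (Fin n) K}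
    (hA : ∀ q, ∀ a b : Fin n, b < a → A q a b = 0) (a : Fin n) :
    ev α A a a = (∑ σ, α σ) * ∏ q, A q a a := by
  rw [ev_apply, Finset.sum_mul]
  apply Finset.sum_congr rfl
  intro σ _
  rw [diag_mul (bt_mul (bt_mul (hA _) (hA _)) (hA _)) (hA _),
    diag_mul (bt_mul (hA _) (hA _)) (hA _), diag_mul (hA _) (hA _),
    ← Equiv.prod_comp σ, Fin.prod_univ_four]

/-- The variables standing before `k` in the monomial `σ`. -/
def bef (σ : Equiv.Perm (Fin 4)) (k : Fin 4) : Finset (Fin 4) :=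
  Finset.univ.filter fun q => σ.symm q < σ.symm k

theorem bef_mem (σ : Equiv.Perm (Fin 4)) (p p' : Fin 4) :
    σ p ∈ bef σ (σ p') ↔ p < p' := by
  simp [bef]

/-- Coefficients detecting identities of `UT_2`. -/
def cc (α : Equiv.Perm (Fin 4) → K) (k : Fin 4) (S : Finset (Fin 4)) : K :=
  ∑ σ with bef σ k = S, α σ

theorem sum_cc (α : Equiv.Perm (Fin 4) → K) (k : Fin 4) (F : Finset (Fin 4) → K) :
    ∑ σ, α σ * F (bef σ k) = ∑ S, cc α k S * F S := by
  rw [← Finset.sum_fiberwise (s := Finset.univ) (g := fun σ => bef σ k)]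
  apply Finset.sum_congr rfl
  intro S _
  rw [cc, Finset.sum_mul]
  apply Finset.sum_congr rfl
  intro σ hσ
  rw [(Finset.mem_filter.1 hσ).2]

theorem ev_sup (α : Equiv.Perm (Fin 4) → K) {A : Fin 4 → Matrix (Fin n) (Fin n) K}
    (hA : ∀ q, ∀ a b : Fin n, b < a → A q a b = 0) (a b : Fin n) (hab : (b : ℕ) = a + 1) :
    ev α A a b = ∑ k, ∑ S, cc α k S *
      ∏ q, (if q = k then A q a b else if q ∈ S then A q a a else A q b b) := by
  have : ∀ k, ∑ S, cc α k S *
      ∏ q, (if q = k then A q a b else if q ∈ S then A q a a else A q b b) =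
      ∑ σ, α σ * ∏ q, (if q = k then A q a b else if q ∈ bef σ k then A q a a else A q b b) :=
    fun k => (sum_cc α k (fun S =>
      ∏ q, (if q = k then A q a b else if q ∈ S then A q a a else A q b b))).symm
  simp only [this]
  rw [Finset.sum_comm, ev_apply]
  apply Finset.sum_congr rfl
  intro σ _
  rw [← Finset.mul_sum]
  congr 1
  rw [← Equiv.sum_comp σ]
  have hp : ∀ k, ∏ q, (if q = k then A q a b else if q ∈ bef σ k then A q a a else A q b b) =
      ∏ p, (if σ p = k then A (σ p) a b else
        if σ p ∈ bef σ k then A (σ p) a a else A (σ p) b b) :=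
    fun k => (Equiv.prod_comp σ (fun q =>
      if q = k then A q a b else if q ∈ bef σ k then A q a a else A q b b)).symm
  simp only [hp]
  simp only [bef_mem, σ.injective.eq_iff]
  rw [sup_mul (bt_mul (bt_mul (hA _) (hA _)) (hA _)) (hA _) a b hab,
    sup_mul (bt_mul (hA _) (hA _)) (hA _) a b hab, sup_mul (hA _) (hA _) a b hab,
    diag_mul (bt_mul (hA _) (hA _)) (hA _), diag_mul (hA _) (hA _)]
  simp [Fin.sum_univ_four, Fin.prod_univ_four]
  ring

theorem prod_one (σ : Equiv.Perm (Fin 4)) (k : Fin 4) (X : Matrix (Fin n) (Fin n) K)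
    (d : Fin 4 → Fin n → K) (A : Fin 4 → Matrix (Fin n) (Fin n) K)
    (hk : A k = X) (hq : ∀ q, q ≠ k → A q = diagonal (d q)) (i j : Fin n) :
    (A (σ 0) * A (σ 1) * A (σ 2) * A (σ 3)) i j =
      X i j * ∏ q, (if q = k then 1 else if q ∈ bef σ k then d q i else d q j) := by
  obtain ⟨p, rfl⟩ := σ.surjective k
  have hq' : ∀ p', p' ≠ p → A (σ p') = diagonal (d (σ p')) :=
    fun p' h => hq _ (fun h' => h (σ.injective h'))
  rw [← Equiv.prod_comp σ]
  simp only [bef_mem, σ.injective.eq_iff]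
  rw [Fin.prod_univ_four]
  fin_cases p
  · have h1 := hq' 1 (by decide)
    have h2 := hq' 2 (by decide)
    have h3 := hq' 3 (by decide)
    simp at hk
    rw [hk, h1, h2, h3]
    simp
    ring
  · have h1 := hq' 0 (by decide)
    have h2 := hq' 2 (by decide)
    have h3 := hq' 3 (by decide)
    simp at hk
    rw [hk, h1, h2, h3]
    simp
    ring
  · have h1 := hq' 0 (by decide)
    have h2 := hq' 1 (by decide)
    have h3 := hq' 3 (by decide)
    simp at hk
    rw [hk, h1, h2, h3]
    simp
    ring
  · have h1 := hq' 0 (by decide)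
    have h2 := hq' 1 (by decide)
    have h3 := hq' 2 (by decide)
    simp at hk
    rw [hk, h1, h2, h3]
    simp
    ring

theorem ev_one (α : Equiv.Perm (Fin 4) → K) (k : Fin 4) (X : Matrix (Fin n) (Fin n) K)
    (d : Fin 4 → Fin n → K) (i j : Fin n) :
    ev α (fun q => if q = k then X else diagonal (d q)) i j =
      X i j * ∑ S, cc α k S *
        ∏ q, (if q = k then 1 else if q ∈ S then d q i else d q j) := by
  rw [← sum_cc α k
    (fun S => ∏ q, (if q = k then 1 else if q ∈ S then d q i else d q j)), ev_apply,
    Finset.mul_sum]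
  apply Finset.sum_congr rfl
  intro σ _
  rw [prod_one σ k X d _ (if_pos rfl) (fun q h => if_neg h)]
  ring

theorem bef_not_mem (σ : Equiv.Perm (Fin 4)) (k : Fin 4) : k ∉ bef σ k := by
  simp [bef]

theorem cc_eq_zero (α : Equiv.Perm (Fin 4) → K) (k : Fin 4) (S : Finset (Fin 4)) (h : k ∈ S) :
    cc α k S = 0 := by
  apply Finset.sum_eq_zero
  intro σ hσ
  have := (Finset.mem_filter.1 hσ).2
  subst this
  exact absurd h (bef_not_mem σ k)

theorem sum_cc' (α : Equiv.Perm (Fin 4) → K) (k : Fin 4) :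
    ∑ σ, α σ = ∑ S, cc α k S := by
  simpa using sum_cc α k (fun _ => 1)

theorem two_pow_inj : ∀ k : Fin 4, ∀ S T : Finset (Fin 4), k ∉ S → k ∉ T →
    (∑ q, (if q = k then 0 else if q ∈ S then 2 ^ (q : ℕ) else 0) =
      ∑ q, (if q = k then 0 else if q ∈ T then 2 ^ (q : ℕ) else 0)) → S = T := by
  decide

/-- Exponent for the generic diagonal matrices. -/
def ex (k : Fin 4) (S : Finset (Fin 4)) (i j : ℕ) : ℕ :=
  ∑ q : Fin 4, if q = k then 0 else if q ∈ S then 2 ^ (q : ℕ) * i else 2 ^ (q : ℕ) * j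

theorem ex_eq (k : Fin 4) (S : Finset (Fin 4)) (i j : ℕ) (h : i ≤ j) :
    ex k S i j + (j - i) * ∑ q : Fin 4, (if q = k then 0 else if q ∈ S then 2 ^ (q : ℕ) else 0)
      = ∑ q : Fin 4, if q = k then 0 else 2 ^ (q : ℕ) * j := by
  obtain ⟨c, rfl⟩ := Nat.exists_eq_add_of_le h
  rw [ex, Finset.mul_sum, ← Finset.sum_add_distrib]
  apply Finset.sum_congr rfl
  intro q _
  split_ifs
  · simp
  · rw [Nat.add_sub_cancel_left]; ring
  · simp

theorem ex_inj (k : Fin 4) (S T : Finset (Fin 4)) (hS : k ∉ S) (hT : k ∉ T) (i j : ℕ)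
    (h : i < j) (he : ex k S i j = ex k T i j) : S = T := by
  apply two_pow_inj k S T hS hT
  have h1 := ex_eq k S i j h.le
  have h2 := ex_eq k T i j h.le
  rw [← h2, he] at h1
  exact Nat.eq_of_mul_eq_mul_left (Nat.sub_pos_of_lt h) (Nat.add_left_cancel h1)

theorem case_one [CharZero K] (α : Equiv.Perm (Fin 4) → K) (k : Fin 4) (S : Finset (Fin 4))
    (hc : cc α k S ≠ 0) (Z : Matrix (Fin n) (Fin n) K) (hZ : ∀ a b : Fin n, b ≤ a → Z a b = 0) :
    Z ∈ Im n α := by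
  have hkS : k ∉ S := fun h => hc (cc_eq_zero α k S h)
  let P : Fin n × Fin n → Polynomial K := fun x =>
    ∑ T, Polynomial.monomial (ex k T x.1 x.2) (cc α k T)
  obtain ⟨t, ht⟩ := exists_nonroot (Finset.univ.filter fun x : Fin n × Fin n => x.1 < x.2) P (by
    intro x hx h0
    have hx := (Finset.mem_filter.1 hx).2
    apply hc
    have := congrArg (fun p => Polynomial.coeff p (ex k S x.1 x.2)) h0
    simp only [P, Polynomial.finsetSum_coeff, Polynomial.coeff_monomial,
      Polynomial.coeff_zero] at this
    rw [Finset.sum_eq_single S] at this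
    · simpa using this
    · intro T _ hTS
      split_ifs with he
      · by_cases hT : k ∈ T
        · exact cc_eq_zero α k T hT
        · exact absurd (ex_inj k T S hT hkS _ _ hx he) hTS
      · rfl
    · simp)
  let d : Fin 4 → Fin n → K := fun q m => t ^ (2 ^ (q : ℕ) * (m : ℕ))
  have hP : ∀ i j, (P (i, j)).eval t = ∑ S, cc α k S *
        ∏ q, (if q = k then 1 else if q ∈ S then d q i else d q j) := by
    intro i j
    simp only [P, Polynomial.eval_finsetSum, Polynomial.eval_monomial]
    apply Finset.sum_congr rfl
    intro T _
    rw [ex, ← Finset.prod_pow_eq_pow_sum]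
    congr 1
    apply Finset.prod_congr rfl
    intro q _
    split_ifs <;> simp [d]
  refine ⟨fun q => if q = k then Matrix.of fun i j => Z i j / (P (i, j)).eval t
    else diagonal (d q), ?_, ?_⟩
  · intro q a b hab
    dsimp only
    split_ifs
    · simp [hZ a b hab.le]
    · exact diagonal_apply_ne _ hab.ne'
  · ext i j
    rw [ev_one, ← hP]
    rcases lt_or_ge i j with h | h
    · have := ht (i, j) (by simpa using h)
      simp [this]
    · simp [hZ i j h]

theorem case_zero (α : Equiv.Perm (Fin 4) → K) (hs : ∑ σ, α σ ≠ 0)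
    (Z : Matrix (Fin n) (Fin n) K) (hZ : ∀ a b : Fin n, b < a → Z a b = 0) :
    Z ∈ Im n α := by
  refine ⟨fun q => if q = 0 then (∑ σ, α σ)⁻¹ • Z else diagonal ((fun _ _ => 1) q), ?_, ?_⟩
  · intro q a b hab
    dsimp only
    split_ifs
    · simp [hZ a b hab]
    · exact diagonal_apply_ne _ hab.ne'
  · ext i j
    rw [ev_one]
    simp only [ite_self, Finset.prod_const_one, mul_one, ← sum_cc']
    simp
    field_simp

/-- Segment in which the variable `q` stands relative to `1` and `3`. -/
def seg (σ : Equiv.Perm (Fin 4)) (q : Fin 4) (i m j : ℕ) : ℕ :=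
  if σ.symm 1 < σ.symm q then (if σ.symm 3 < σ.symm q then j else m)
  else (if σ.symm 3 < σ.symm q then m else i)

theorem seg_unique (σ : Equiv.Perm (Fin 4))
    (h10 : ¬ σ.symm 1 < σ.symm 0) (h12 : σ.symm 1 < σ.symm 2)
    (h32 : ¬ σ.symm 3 < σ.symm 2) : σ = 1 := by
  have n01 : σ.symm 0 ≠ σ.symm 1 := fun h => absurd (σ.symm.injective h) (by decide)
  have n23 : σ.symm 2 ≠ σ.symm 3 := fun h => absurd (σ.symm.injective h) (by decide)
  have e0 : σ.symm 0 = 0 := by omega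
  have e1 : σ.symm 1 = 1 := by omega
  have e2 : σ.symm 2 = 2 := by omega
  have e3 : σ.symm 3 = 3 := by omega
  have : σ.symm = 1 := by
    ext q
    fin_cases q
    · exact congrArg Fin.val e0
    · exact congrArg Fin.val e1
    · exact congrArg Fin.val e2
    · exact congrArg Fin.val e3
  have h2 : σ = σ.symm.symm := rfl
  rw [h2, this]
  rfl

set_option maxHeartbeats 4000000 in
theorem prod_two (σ : Equiv.Perm (Fin 4)) (X Y : Matrix (Fin n) (Fin n) K)
    (d e : ℕ → K) (A : Fin 4 → Matrix (Fin n) (Fin n) K)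
    (h0 : A 0 = diagonal fun i : Fin n => d i) (h1 : A 1 = X) (h2 : A 2 = diagonal fun i : Fin n => e i)
    (h3 : A 3 = Y) (i j : Fin n) :
    (A (σ 0) * A (σ 1) * A (σ 2) * A (σ 3)) i j =
      ∑ m, (if σ.symm 1 < σ.symm 3 then X i m * Y m j else Y i m * X m j) *
        (d (seg σ 0 i m j) * e (seg σ 2 i m j)) := by
  have k0 : σ (σ.symm 0) = 0 := σ.apply_symm_apply _
  have k1 : σ (σ.symm 1) = 1 := σ.apply_symm_apply _
  have k2 : σ (σ.symm 2) = 2 := σ.apply_symm_apply _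
  have k3 : σ (σ.symm 3) = 3 := σ.apply_symm_apply _
  have n01 : σ.symm 0 ≠ σ.symm 1 := fun h => absurd (σ.symm.injective h) (by decide)
  have n02 : σ.symm 0 ≠ σ.symm 2 := fun h => absurd (σ.symm.injective h) (by decide)
  have n03 : σ.symm 0 ≠ σ.symm 3 := fun h => absurd (σ.symm.injective h) (by decide)
  have n12 : σ.symm 1 ≠ σ.symm 2 := fun h => absurd (σ.symm.injective h) (by decide)
  have n13 : σ.symm 1 ≠ σ.symm 3 := fun h => absurd (σ.symm.injective h) (by decide)
  have n23 : σ.symm 2 ≠ σ.symm 3 := fun h => absurd (σ.symm.injective h) (by decide)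
  unfold seg
  generalize σ.symm 0 = r0 at *
  generalize σ.symm 1 = r1 at *
  generalize σ.symm 2 = r2 at *
  generalize σ.symm 3 = r3 at *
  fin_cases r0 <;> fin_cases r1 <;> first | exact absurd rfl n01 | skip
  all_goals fin_cases r2 <;> first | exact absurd rfl n02 | exact absurd rfl n12 | skip
  all_goals fin_cases r3 <;> first
    | exact absurd rfl n03 | exact absurd rfl n13 | exact absurd rfl n23 | skip
  all_goals
    simp only [Fin.zero_eta, Fin.mk_one, Fin.reduceFinMk] at k0 k1 k2 k3
    rw [k0, k1, k2, k3, h0, h1, h2, h3]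
    first
      | (rw [mul_apply]
         simp [mul_diagonal, diagonal_mul]
         done)
      | (simp only [mul_diagonal, diagonal_mul]
         rw [mul_apply]
         simp only [mul_diagonal, diagonal_mul, diagonal_mul_diagonal, Finset.sum_mul]
         apply Finset.sum_congr rfl
         intro m _
         simp
         done)
      | (simp only [mul_diagonal, diagonal_mul]
         rw [mul_apply]
         simp only [mul_diagonal, diagonal_mul, diagonal_mul_diagonal, Finset.sum_mul]
         apply Finset.sum_congr rfl
         intro m _
         simp
         ring)

/-- The solution of the triangular linear system. -/
def ysol (z : ℕ → ℕ → K) (U V : ℕ → ℕ → ℕ → K) : ℕ → ℕ → K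
  | 0, _ => 0
  | i + 1, j => if j ≤ i + 1 then 0 else
      (z i j - ysol z U V i (j - 1) * V i (j - 1) j) / U i (i + 1) j

theorem ysol_zero (z : ℕ → ℕ → K) (U V : ℕ → ℕ → ℕ → K) (i j : ℕ) (h : j ≤ i) :
    ysol z U V i j = 0 := by
  cases i with
  | zero => rfl
  | succ i => rw [ysol, if_pos h]

theorem case_two_aux [CharZero K] (α : Equiv.Perm (Fin 4) → K) (h1 : α 1 ≠ 0)
    (Z : Matrix (Fin n) (Fin n) K)
    (hZ : ∀ a b : Fin n, (b : ℤ) - (a : ℤ) ≤ 1 → Z a b = 0) : Z ∈ Im n α := by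
  let P : Fin n × Fin n → Polynomial K := fun x =>
    ∑ σ with σ.symm 1 < σ.symm 3, Polynomial.monomial
      (n * seg σ 0 x.1 (x.1 + 1) x.2 + seg σ 2 x.1 (x.1 + 1) x.2) (α σ)
  obtain ⟨t, ht⟩ := exists_nonroot
    (Finset.univ.filter fun x : Fin n × Fin n => (x.1 : ℕ) + 1 < x.2) P (by
    intro x hx h0
    have hx := (Finset.mem_filter.1 hx).2
    apply h1
    have := congrArg (fun p => Polynomial.coeff p (n * x.1 + (x.1 + 1))) h0
    simp only [P, Polynomial.finsetSum_coeff, Polynomial.coeff_monomial,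
      Polynomial.coeff_zero] at this
    rw [Finset.sum_eq_single 1] at this
    · have s0 : seg 1 0 x.1 (x.1 + 1) x.2 = x.1 := rfl
      have s2 : seg 1 2 x.1 (x.1 + 1) x.2 = x.1 + 1 := rfl
      rwa [s0, s2, if_pos rfl] at this
    · intro σ hσ hne
      have hσ := (Finset.mem_filter.1 hσ).2
      rw [if_neg]
      intro he
      have hx2 := x.2.isLt
      have b2 : seg σ 2 x.1 (x.1 + 1) x.2 < n := by
        unfold seg; split_ifs <;> omega
      have e2 : seg σ 2 x.1 (x.1 + 1) x.2 = x.1 + 1 := by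
        have := congrArg (· % n) he
        simp only [Nat.mul_add_mod] at this
        rwa [Nat.mod_eq_of_lt b2, Nat.mod_eq_of_lt (by omega)] at this
      have e0 : seg σ 0 x.1 (x.1 + 1) x.2 = x.1 := by
        rw [e2] at he
        exact Nat.eq_of_mul_eq_mul_left (by omega) (Nat.add_right_cancel he)
      apply hne
      unfold seg at e0 e2
      apply seg_unique σ
      · intro h; rw [if_pos h] at e0; split_ifs at e0 <;> omega
      · by_contra h
        rw [if_neg h] at e2
        split_ifs at e2 with h'
        · exact h (hσ.trans h')
        · omega
      · intro h; simp only [if_pos h, if_pos (hσ.trans h)] at e2; omega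
    · intro h; exact absurd (Finset.mem_filter.2 ⟨Finset.mem_univ _, by decide⟩) h)
  let W : Equiv.Perm (Fin 4) → ℕ → ℕ → ℕ → K := fun σ i m j =>
    α σ * ((t ^ n) ^ (seg σ 0 i m j) * t ^ (seg σ 2 i m j))
  let U : ℕ → ℕ → ℕ → K := fun i m j => ∑ σ with σ.symm 1 < σ.symm 3, W σ i m j
  let V : ℕ → ℕ → ℕ → K := fun i m j => ∑ σ with ¬ σ.symm 1 < σ.symm 3, W σ i m j
  have hU : ∀ i j : Fin n, (i : ℕ) + 1 < j → U i (i + 1) j ≠ 0 := by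
    intro i j hij
    have := ht (i, j) (by simpa using hij)
    simpa [P, Polynomial.eval_finsetSum, Polynomial.eval_monomial, U, W, pow_add, pow_mul]
      using this
  let z : ℕ → ℕ → K := fun i j => if h : i < n ∧ j < n then Z ⟨i, h.1⟩ ⟨j, h.2⟩ else 0
  let y := ysol z U V
  let X : Matrix (Fin n) (Fin n) K := Matrix.of fun i j => if (j : ℕ) = i + 1 then 1 else 0
  let Y : Matrix (Fin n) (Fin n) K := Matrix.of fun i j => y i j
  let A : Fin 4 → Matrix (Fin n) (Fin n) K :=
    ![diagonal fun i => (t ^ n) ^ (i : ℕ), X, diagonal fun i => t ^ (i : ℕ), Y]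
  refine ⟨A, ?_, ?_⟩
  · intro q a b hab
    have hab' : (b : ℕ) < a := hab
    fin_cases q
    · exact diagonal_apply_ne _ hab.ne'
    · simp [A, X]; omega
    · exact diagonal_apply_ne _ hab.ne'
    · exact ysol_zero _ _ _ _ _ hab'.le
  · ext i j
    have key : ev α A i j = ∑ m, X i m * Y m j * U i m j + ∑ m, Y i m * X m j * V i m j := by
      rw [ev_apply, ← Finset.sum_filter_add_sum_filter_not _ (fun σ => σ.symm 1 < σ.symm 3)]
      congr 1
      · simp only [U, Finset.mul_sum]
        rw [Finset.sum_comm]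
        apply Finset.sum_congr rfl
        intro σ hσ
        have hσ := (Finset.mem_filter.1 hσ).2
        rw [prod_two σ X Y (fun i => (t ^ n) ^ i) (fun i => t ^ i) A rfl rfl rfl rfl,
          Finset.mul_sum]
        apply Finset.sum_congr rfl
        intro m _
        rw [if_pos hσ]
        simp only [W]
        ring
      · simp only [V, Finset.mul_sum]
        rw [Finset.sum_comm]
        apply Finset.sum_congr rfl
        intro σ hσ
        have hσ := (Finset.mem_filter.1 hσ).2
        rw [prod_two σ X Y (fun i => (t ^ n) ^ i) (fun i => t ^ i) A rfl rfl rfl rfl,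
          Finset.mul_sum]
        apply Finset.sum_congr rfl
        intro m _
        rw [if_neg hσ]
        simp only [W]
        ring
    rw [key]
    have hi := i.isLt
    have hj := j.isLt
    rcases lt_or_ge ((i : ℕ) + 1) j with h | h
    · rw [Finset.sum_eq_single (⟨i + 1, by omega⟩ : Fin n),
        Finset.sum_eq_single (⟨j - 1, by omega⟩ : Fin n)]
      · have e1 : X i ⟨i + 1, by omega⟩ = 1 := by simp [X]
        have e2 : X ⟨j - 1, by omega⟩ j = 1 := by
          simp only [X, Matrix.of_apply]
          rw [if_pos (by omega)]
        have e3 : Y ⟨i + 1, by omega⟩ j =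
            (z i j - y i (j - 1) * V i (j - 1) j) / U i (i + 1) j := by
          change ysol z U V (i + 1) j = _
          rw [ysol, if_neg (by omega)]
        have e4 : Y i ⟨j - 1, by omega⟩ = y i (j - 1) := rfl
        have e5 : z i j = Z i j := by simp [z]
        rw [e1, e2, e3, e4, e5]
        have := hU i j h
        simp only [one_mul, mul_one]
        rw [div_mul_cancel₀ _ this]
        ring
      · intro m _ hm
        have : ¬ ((j : ℕ) = m + 1) := fun h' => hm (Fin.ext (by simp; omega))
        simp [X, this]
      · simp
      · intro m _ hm
        have : ¬ ((m : ℕ) = i + 1) := fun h' => hm (Fin.ext (by simp; omega))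
        simp [X, this]
      · simp
    · rw [hZ i j (by omega), Finset.sum_eq_zero, Finset.sum_eq_zero, add_zero]
      · intro m _
        by_cases hm : (j : ℕ) = m + 1
        · have : Y i m = 0 := ysol_zero _ _ _ _ _ (by omega)
          simp [this]
        · simp [X, hm]
      · intro m _
        by_cases hm : (m : ℕ) = i + 1
        · have : Y m j = 0 := ysol_zero _ _ _ _ _ (by omega)
          simp [this]
        · simp [X, hm]

theorem main [CharZero K] (hn : 2 ≤ n) (α : Equiv.Perm (Fin 4) → K) :
    Im n α = {0} ∨
    Im n α = {X | ∀ a b : Fin n, (b : ℤ) - (a : ℤ) ≤ 1 → X a b = 0} ∨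
    Im n α = {X | ∀ a b : Fin n, b ≤ a → X a b = 0} ∨
    Im n α = {X | ∀ a b : Fin n, b < a → X a b = 0} := by
  by_cases hs : ∑ σ, α σ = 0
  swap
  · right; right; right
    apply Set.Subset.antisymm
    · rintro X ⟨A, hA, rfl⟩ a b h
      exact upper α hA a b h
    · exact fun Z hZ => case_zero α hs Z hZ
  by_cases hc : ∃ k S, cc α k S ≠ 0
  · right; right; left
    obtain ⟨k, S, hc⟩ := hc
    apply Set.Subset.antisymm
    · rintro X ⟨A, hA, rfl⟩ a b h
      rcases h.lt_or_eq with h | rfl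
      · exact upper α hA a b h
      · rw [ev_diag α hA, hs, zero_mul]
    · exact fun Z hZ => case_one α k S hc Z hZ
  push Not at hc
  by_cases hα : ∃ σ, α σ ≠ 0
  · right; left
    obtain ⟨τ, hτ⟩ := hα
    apply Set.Subset.antisymm
    · rintro X ⟨A, hA, rfl⟩ a b h
      rcases lt_trichotomy b a with h' | rfl | h'
      · exact upper α hA a b h'
      · rw [ev_diag α hA, hs, zero_mul]
      · rw [ev_sup α hA a b (by rw [Fin.lt_def] at h'; omega)]
        simp [hc]
    · intro Z hZ
      apply Im_shift α τ
      exact case_two_aux _ (by simpa using hτ) Z hZ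
  · left
    push Not at hα
    ext X
    constructor
    · rintro ⟨A, hA, rfl⟩
      simp [ev, hα]
    · rintro rfl
      exact ⟨fun _ => 0, by simp, by simp [ev]⟩

end UTImg

/-- Over a field of characteristic zero, the image of a multilinear
polynomial `p = Σ_{σ ∈ S_4} α_σ x_{σ(1)} x_{σ(2)} x_{σ(3)} x_{σ(4)}` of degree four on
`UT_n` is `{0}`, `UT_n^{(1)}`, `UT_n^{(0)}` or `UT_n`. -/
theorem stmt18 {K : Type*} [Field K] [CharZero K] {n : ℕ} (hn : 2 ≤ n)
    (α : Equiv.Perm (Fin 4) → K) :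
    {X : Matrix (Fin n) (Fin n) K | ∃ A : Fin 4 → Matrix (Fin n) (Fin n) K,
        (∀ q, ∀ a b : Fin n, b < a → A q a b = 0) ∧
        X = ∑ σ : Equiv.Perm (Fin 4), α σ • (A (σ 0) * A (σ 1) * A (σ 2) * A (σ 3))}
      = {0} ∨
    {X : Matrix (Fin n) (Fin n) K | ∃ A : Fin 4 → Matrix (Fin n) (Fin n) K,
        (∀ q, ∀ a b : Fin n, b < a → A q a b = 0) ∧
        X = ∑ σ : Equiv.Perm (Fin 4), α σ • (A (σ 0) * A (σ 1) * A (σ 2) * A (σ 3))}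
      = {X : Matrix (Fin n) (Fin n) K | ∀ a b : Fin n, (b : ℤ) - (a : ℤ) ≤ 1 → X a b = 0} ∨
    {X : Matrix (Fin n) (Fin n) K | ∃ A : Fin 4 → Matrix (Fin n) (Fin n) K,
        (∀ q, ∀ a b : Fin n, b < a → A q a b = 0) ∧
        X = ∑ σ : Equiv.Perm (Fin 4), α σ • (A (σ 0) * A (σ 1) * A (σ 2) * A (σ 3))}
      = {X : Matrix (Fin n) (Fin n) K | ∀ a b : Fin n, b ≤ a → X a b = 0} ∨
    {X : Matrix (Fin n) (Fin n) K | ∃ A : Fin 4 → Matrix (Fin n) (Fin n) K,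
        (∀ q, ∀ a b : Fin n, b < a → A q a b = 0) ∧
        X = ∑ σ : Equiv.Perm (Fin 4), α σ • (A (σ 0) * A (σ 1) * A (σ 2) * A (σ 3))}
      = {X : Matrix (Fin n) (Fin n) K | ∀ a b : Fin n, b < a → X a b = 0} := by
  exact UTImg.main hn α
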